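/- Let X be a z-exact category. Then the lattice nsub(A) of normal subobjects is distributive for every object A of X if and only if the lattice nsub(S) of normal subobjects is distributive for every object S of the category ses(X) of short exact sequences of X. Consequently, when this holds, nsub(S) is distributive for every object S of the iterated category ses^n(X), for every n. -/

import Mathlib

open CategoryTheory CategoryTheory.Limits

universe v u

variable {C : Type u} [Category.{v} C]

/-- A morphism is a *normal monomorphism* if it is a kernel of some morphism. -/
def IsNormalMonoMap [HasZeroMorphisms C] {X Y : C} (f : X ⟶ Y) : Prop :=
  Nonempty (NormalMono f)

/-- A morphism is a *normal epimorphism* if it is a cokernel of some morphism. -/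
def IsNormalEpiMap [HasZeroMorphisms C] {X Y : C} (f : X ⟶ Y) : Prop :=
  Nonempty (NormalEpi f)

/-- A morphism is *normal* if it factors as a normal epimorphism followed by a
normal monomorphism. -/
def IsNormalMap [HasZeroMorphisms C] {X Y : C} (f : X ⟶ Y) : Prop :=
  ∃ (I : C) (e : X ⟶ I) (m : I ⟶ Y), IsNormalEpiMap e ∧ IsNormalMonoMap m ∧ e ≫ m = f

/-- A morphism is *antinormal* if it factors as a normal monomorphism followed by a
normal epimorphism. -/
def IsAntinormalMap [HasZeroMorphisms C] {X Y : C} (f : X ⟶ Y) : Prop :=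
  ∃ (I : C) (m : X ⟶ I) (e : I ⟶ Y), IsNormalMonoMap m ∧ IsNormalEpiMap e ∧ m ≫ e = f

variable (C) in
/-- A z-exact category is *di-exact* if every antinormal morphism is normal. -/
def IsDiExact [HasZeroMorphisms C] : Prop :=
  ∀ ⦃X Y : C⦄ (f : X ⟶ Y), IsAntinormalMap f → IsNormalMap f

variable (C) in
/-- A z-exact category is *homologically self-dual* if for every totally normal sequence of
monomorphisms `f : X ⟶ Y`, `g : Y ⟶ Z`, the induced morphism `Y/X ⟶ Z/X` between the
cokernels is a normal monomorphism. -/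
def IsHomologicallySelfDual [HasZeroMorphisms C] : Prop :=
  ∀ ⦃X Y Z QY QZ : C⦄ (f : X ⟶ Y) (g : Y ⟶ Z),
    IsNormalMonoMap f → IsNormalMonoMap g → IsNormalMonoMap (f ≫ g) →
    ∀ (p : Y ⟶ QY) (wp : f ≫ p = 0), IsColimit (CokernelCofork.ofπ p wp) →
    ∀ (q : Z ⟶ QZ) (wq : (f ≫ g) ≫ q = 0), IsColimit (CokernelCofork.ofπ q wq) →
    ∀ (u : QY ⟶ QZ), p ≫ u = g ≫ q → IsNormalMonoMap u

/-- The poset of normal subobjects of an object. -/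
abbrev NormalSubobject [HasZeroMorphisms C] (A : C) : Type (max u v) :=
  {P : Subobject A // Nonempty (NormalMono P.arrow)}

/-- Modularity of the poset of normal subobjects, expressed via `IsLUB`/`IsGLB`. -/
def NormalSubobjectsModular [HasZeroMorphisms C] (A : C) : Prop :=
  ∀ P Q R S T U V : NormalSubobject A, R ≤ P →
    IsLUB {Q, R} S → IsGLB {P, S} T → IsGLB {P, Q} U → IsLUB {U, R} V → T = V

/-- Distributivity of the poset of normal subobjects, expressed via `IsLUB`/`IsGLB`. -/
def NormalSubobjectsDistrib [HasZeroMorphisms C] (A : C) : Prop :=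
  ∀ P Q R S T U V W : NormalSubobject A,
    IsLUB {Q, R} S → IsGLB {P, S} T → IsGLB {P, Q} U → IsGLB {P, R} V →
    IsLUB {U, V} W → T = W


/-- A short exact sequence in a pointed category: `f` is a kernel of `g` and
`g` is a cokernel of `f`. -/
structure SES (C : Type u) [Category.{v} C] [HasZeroMorphisms C] : Type (max u v) where
  X : C
  Y : C
  Z : C
  f : X ⟶ Y
  g : Y ⟶ Z
  w : f ≫ g = 0
  isKernel : Nonempty (IsLimit (KernelFork.ofι f w))
  isCokernel : Nonempty (IsColimit (CokernelCofork.ofπ g w))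

namespace SES

variable {C : Type u} [Category.{v} C] [HasZeroMorphisms C]

/-- Morphisms of short exact sequences: componentwise commuting triples. -/
@[ext] structure Hom (S T : SES C) : Type v where
  a : S.X ⟶ T.X
  b : S.Y ⟶ T.Y
  c : S.Z ⟶ T.Z
  comm₁ : S.f ≫ b = a ≫ T.f
  comm₂ : S.g ≫ c = b ≫ T.g

instance : Category (SES C) where
  Hom := Hom
  id S := ⟨𝟙 _, 𝟙 _, 𝟙 _, by simp, by simp⟩
  comp u v := ⟨u.a ≫ v.a, u.b ≫ v.b, u.c ≫ v.c,
    by rw [← Category.assoc, u.comm₁, Category.assoc, v.comm₁, ← Category.assoc],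
    by rw [← Category.assoc, u.comm₂, Category.assoc, v.comm₂, ← Category.assoc]⟩
  id_comp u := by apply Hom.ext <;> simp [CategoryStruct.id, CategoryStruct.comp]
  comp_id u := by apply Hom.ext <;> simp [CategoryStruct.id, CategoryStruct.comp]
  assoc u v w := by apply Hom.ext <;> simp [CategoryStruct.comp]

instance : HasZeroMorphisms (SES C) where
  zero S T := ⟨⟨0, 0, 0, by simp, by simp⟩⟩
  comp_zero u T := by apply Hom.ext <;> exact comp_zero
  zero_comp S {T U} u := by apply Hom.ext <;> exact zero_comp

end SES

/-- A pointed category bundled with its instances, used to iterate the `SES`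
construction. -/
structure ZCat.{v', u'} : Type (max u' v' + 1) where
  obj : Type (max u' v')
  [cat : Category.{v'} obj]
  [zm : HasZeroMorphisms obj]

attribute [instance] ZCat.cat ZCat.zm

/-- `iterSES C n` is the category `ses^(n+1)(C)` of `(n+1)`-fold iterated short exact
sequences of `C`. -/
def iterSES (C : Type u) [Category.{v} C] [HasZeroMorphisms C] : ℕ → ZCat.{v, u}
  | 0 => { obj := SES C }
  | n + 1 => { obj := SES (iterSES C n).obj }

/-!
A morphism of short exact sequences is determined by its middle component, and a morphism `b` of
middle objects extends to one exactly when `S.f ≫ b ≫ T.g = 0`. Hence kernels and cokernels of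
short exact sequences are computed on middle objects, and every morphism out of a middle object
`S.Y` lifts to a morphism out of `S`. Taking kernels, the normal subobjects of `S` are the normal
subobjects of `S.Y`, so distributivity for `S` means distributivity for `S.Y`, and every object
is the middle object of some short exact sequence.
-/

section NormalSubobject

variable [HasZeroMorphisms C]

lemma IsNormalMonoMap.mono {X Y : C} {m : X ⟶ Y} (hm : IsNormalMonoMap m) : Mono m :=
  hm.elim fun h => mono_of_isLimit_fork h.isLimit

lemma IsNormalMonoMap.subobjectMk_arrow {X Y : C} {m : X ⟶ Y} [Mono m] (hm : IsNormalMonoMap m) :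
    IsNormalMonoMap (Subobject.mk m).arrow :=
  hm.map fun h => NormalMono.ofArrowIso h
    (Arrow.isoMk (Subobject.underlyingIso m).symm (Iso.refl _) (by simp))

universe v' u'

variable {D : Type u'} [Category.{v'} D] [HasZeroMorphisms D] (F : D ⥤ C)
  [F.PreservesZeroMorphisms] [∀ {X Y : D} (f : X ⟶ Y), PreservesLimit (parallelPair f 0) F]

lemma IsNormalMonoMap.map {X Y : D} {m : X ⟶ Y} (hm : IsNormalMonoMap m) :
    IsNormalMonoMap (F.map m) := by
  obtain ⟨Z, g, w, hlim⟩ := hm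
  exact ⟨F.obj Z, F.map g, _, isLimitForkMapOfIsLimit' F w hlim⟩

namespace NormalSubobject

/-- The image of a normal subobject under a kernel-preserving functor. -/
noncomputable def map {S : D} (P : NormalSubobject S) : NormalSubobject (F.obj S) :=
  have hP : IsNormalMonoMap (F.map P.1.arrow) := IsNormalMonoMap.map F P.2
  haveI := hP.mono
  ⟨Subobject.mk (F.map P.1.arrow), hP.subobjectMk_arrow⟩

lemma map_le_map_iff [F.Faithful] {S : D} {P Q : NormalSubobject S} :
    map F P ≤ map F Q ↔ P ≤ Q := by
  have := (IsNormalMonoMap.map F P.2).mono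
  have := (IsNormalMonoMap.map F Q.2).mono
  change Subobject.mk (F.map P.1.arrow) ≤ Subobject.mk (F.map Q.1.arrow) ↔ P.1 ≤ Q.1
  constructor
  · intro h
    obtain ⟨Z, g, w, hlim⟩ := Q.2
    have hg : P.1.arrow ≫ g = 0 := F.map_injective <| by
      rw [F.map_comp, ← Subobject.ofMkLEMk_comp h, Category.assoc, ← F.map_comp, w,
        F.map_zero, F.map_zero, comp_zero]
    obtain ⟨l, hl⟩ := KernelFork.IsLimit.lift' hlim P.1.arrow hg
    exact Subobject.le_of_comm l hl
  · intro h
    exact Subobject.mk_le_mk_of_comm (F.map (Subobject.ofLE _ _ h))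
      (by rw [← F.map_comp, Subobject.ofLE_arrow])

lemma map_surjective [HasKernels D] {S : D}
    (hF : ∀ ⦃B : C⦄ (g : F.obj S ⟶ B),
      ∃ (T : D) (p : S ⟶ T) (i : B ⟶ F.obj T), Mono i ∧ F.map p = g ≫ i) :
    Function.Surjective (map F (S := S)) := by
  rintro ⟨K, B, g, w, hK⟩
  obtain ⟨T, p, i, _, hp⟩ := hF g
  have hker : IsNormalMonoMap (kernel.ι p) := ⟨T, p, kernel.condition p, kernelIsKernel p⟩
  have := (hker.map F).mono
  have := (hker.subobjectMk_arrow.map F).mono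
  have image_isKernel := isLimitForkMapOfIsLimit' F (kernel.condition p) (kernelIsKernel p)
  refine ⟨⟨Subobject.mk (kernel.ι p), hker.subobjectMk_arrow⟩, Subtype.ext ?_⟩
  calc Subobject.mk (F.map (Subobject.mk (kernel.ι p)).arrow)
    _ = Subobject.mk (F.map (kernel.ι p)) :=
      Subobject.mk_eq_mk_of_comm _ _ (F.mapIso (Subobject.underlyingIso (kernel.ι p)))
        (by simp [← F.map_comp])
    _ = Subobject.mk K.arrow :=
      Subobject.mk_eq_mk_of_comm _ _
        (image_isKernel.conePointUniqueUpToIso (isKernelCompMono hK i hp))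
        (image_isKernel.conePointUniqueUpToIso_hom_comp _ WalkingParallelPair.zero)
    _ = K := Subobject.mk_arrow K

/-- The identification of the normal subobjects of `S` with those of `F.obj S`, for a faithful
kernel-preserving functor `F` that lifts every morphism out of `F.obj S`, up to a monomorphism,
to a morphism out of `S`. -/
noncomputable def mapOrderIso [F.Faithful] [HasKernels D] {S : D}
    (hF : ∀ ⦃B : C⦄ (g : F.obj S ⟶ B),
      ∃ (T : D) (p : S ⟶ T) (i : B ⟶ F.obj T), Mono i ∧ F.map p = g ≫ i) :
    NormalSubobject S ≃o NormalSubobject (F.obj S) :=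
  RelIso.ofSurjective (OrderEmbedding.ofMapLEIff (map F) fun _ _ => map_le_map_iff F)
    (map_surjective F hF)

end NormalSubobject

end NormalSubobject

section Distributivity

lemma isLUB_pair_apply_iff {α β : Type*} [Preorder α] [Preorder β] (e : α ≃o β) {x y z : α} :
    IsLUB {e x, e y} (e z) ↔ IsLUB {x, y} z := by
  rw [← Set.image_pair, e.isLUB_image']

lemma isGLB_pair_apply_iff {α β : Type*} [Preorder α] [Preorder β] (e : α ≃o β) {x y z : α} :
    IsGLB {e x, e y} (e z) ↔ IsGLB {x, y} z :=
  isLUB_pair_apply_iff e.dual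

universe v' u'

lemma NormalSubobjectsDistrib.of_orderIso [HasZeroMorphisms C]
    {D : Type u'} [Category.{v'} D] [HasZeroMorphisms D] {A : C} {B : D}
    (hA : NormalSubobjectsDistrib A) (e : NormalSubobject B ≃o NormalSubobject A) :
    NormalSubobjectsDistrib B := by
  intro P Q R S T U V W hS hT hU hV hW
  exact e.injective <| hA _ _ _ _ _ _ _ _ ((isLUB_pair_apply_iff e).2 hS)
    ((isGLB_pair_apply_iff e).2 hT) ((isGLB_pair_apply_iff e).2 hU)
    ((isGLB_pair_apply_iff e).2 hV) ((isLUB_pair_apply_iff e).2 hW)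

end Distributivity

section KernelCokernel

variable [HasZeroMorphisms C]

lemma comp_cokernel_π_kernel_ι_eq_zero_iff {B D W : C} (h : B ⟶ D) [HasKernel h]
    [HasCokernel (kernel.ι h)] (k : W ⟶ B) :
    k ≫ cokernel.π (kernel.ι h) = 0 ↔ k ≫ h = 0 := by
  constructor <;> intro hk
  · rw [← cokernel.π_desc (kernel.ι h) h (kernel.condition h), reassoc_of% hk, zero_comp]
  · rw [← kernel.lift_ι h k hk, Category.assoc, cokernel.condition, comp_zero]

lemma kernel_ι_cokernel_π_comp_eq_zero_iff {U B W : C} (m : U ⟶ B) [HasCokernel m]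
    [HasKernel (cokernel.π m)] (k : B ⟶ W) :
    kernel.ι (cokernel.π m) ≫ k = 0 ↔ m ≫ k = 0 := by
  constructor <;> intro hk
  · rw [← kernel.lift_ι (cokernel.π m) m (cokernel.condition m), Category.assoc, hk, comp_zero]
  · rw [← cokernel.π_desc m k hk, kernel.condition_assoc, zero_comp]

end KernelCokernel

namespace SES

section Middle

variable [HasZeroMorphisms C]

instance mono_f (S : SES C) : Mono S.f :=
  mono_of_isLimit_fork S.isKernel.some

instance epi_g (S : SES C) : Epi S.g :=
  epi_of_isColimit_cofork S.isCokernel.some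

lemma comp_b {S T U : SES C} (p : S ⟶ T) (q : T ⟶ U) : (p ≫ q).b = p.b ≫ q.b := rfl

lemma zero_b (S T : SES C) : Hom.b (0 : S ⟶ T) = 0 := rfl

lemma hom_ext_b {S T : SES C} {p q : S ⟶ T} (h : p.b = q.b) : p = q := by
  apply Hom.ext
  · rw [← cancel_mono T.f, ← p.comm₁, ← q.comm₁, h]
  · exact h
  · rw [← cancel_epi S.g, p.comm₂, q.comm₂, h]

lemma f_comp_b_comp_g {S T : SES C} (p : S ⟶ T) : S.f ≫ p.b ≫ T.g = 0 := by
  rw [← p.comm₂, reassoc_of% S.w, zero_comp]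

/-- The morphism of short exact sequences with a prescribed middle component. -/
noncomputable def homMk {S T : SES C} (b : S.Y ⟶ T.Y) (h : S.f ≫ b ≫ T.g = 0) : S ⟶ T :=
  have l := KernelFork.IsLimit.lift' T.isKernel.some (S.f ≫ b) (by rw [Category.assoc, h])
  have d := CokernelCofork.IsColimit.desc' S.isCokernel.some (b ≫ T.g) h
  { a := l.1
    b := b
    c := d.1
    comm₁ := l.2.symm
    comm₂ := d.2 }

variable (C) in
/-- The functor sending a short exact sequence to its middle object. -/
def middle : SES C ⥤ C where
  obj := Y
  map := Hom.b

instance : (middle C).Faithful where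
  map_injective := hom_ext_b

instance : (middle C).PreservesZeroMorphisms where

end Middle

section Kernels

variable [HasZeroMorphisms C] [HasKernels C] [HasCokernels C]

/-- The short exact sequence `kernel h ↣ B ↠ cokernel (kernel.ι h)` of a morphism
`h : B ⟶ D`. -/
noncomputable def ofKernel {B D : C} (h : B ⟶ D) : SES C where
  X := kernel h
  Y := B
  Z := cokernel (kernel.ι h)
  f := kernel.ι h
  g := cokernel.π (kernel.ι h)
  w := cokernel.condition _
  isKernel := ⟨KernelFork.isLimitOfIsLimitOfIff' (kernelIsKernel h) _ fun _ k =>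
    (comp_cokernel_π_kernel_ι_eq_zero_iff h k).symm⟩
  isCokernel := ⟨cokernelIsCokernel _⟩

/-- The short exact sequence `kernel (cokernel.π m) ↣ B ↠ cokernel m` of a morphism
`m : U ⟶ B`. -/
noncomputable def ofCokernel {U B : C} (m : U ⟶ B) : SES C where
  X := kernel (cokernel.π m)
  Y := B
  Z := cokernel m
  f := kernel.ι (cokernel.π m)
  g := cokernel.π m
  w := kernel.condition _
  isKernel := ⟨kernelIsKernel _⟩
  isCokernel := ⟨CokernelCofork.isColimitOfIsColimitOfIff' (cokernelIsCokernel m) _ fun _ k =>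
    (kernel_ι_cokernel_π_comp_eq_zero_iff m k).symm⟩

/-- The lift of a morphism `g` out of the middle object of `S` to a morphism out of `S`. -/
noncomputable def toOfCokernel (S : SES C) {B : C} (g : S.Y ⟶ B) : S ⟶ ofCokernel (S.f ≫ g) :=
  homMk g ((Category.assoc _ _ _).symm.trans (cokernel.condition (S.f ≫ g)))

/-- The inclusion into `S` of the kernel of `p : S ⟶ T`. The middle object of the kernel is the
kernel of `p.b`, and its left object is the intersection of the latter with `S.X`. -/
noncomputable def kernelι {S T : SES C} (p : S ⟶ T) : ofKernel (kernel.ι p.b ≫ S.g) ⟶ S :=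
  homMk (kernel.ι p.b) (kernel.condition (kernel.ι p.b ≫ S.g))

lemma kernelι_comp {S T : SES C} (p : S ⟶ T) : kernelι p ≫ p = 0 :=
  hom_ext_b (kernel.condition p.b)

/-- The universal property of `kernelι p`. -/
noncomputable def kernelιIsKernel {S T : SES C} (p : S ⟶ T) :
    IsLimit (KernelFork.ofι (kernelι p) (kernelι_comp p)) :=
  KernelFork.IsLimit.ofι _ _
    (fun {W} k hk =>
      have hk_b : k.b ≫ p.b = 0 := by rw [← comp_b, hk, zero_b]
      homMk (T := ofKernel (kernel.ι p.b ≫ S.g)) (kernel.lift p.b k.b hk_b) <| by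
        have hl : (W.f ≫ kernel.lift p.b k.b hk_b) ≫ kernel.ι p.b ≫ S.g = 0 := by
          simp [f_comp_b_comp_g]
        exact (Category.assoc _ _ _).symm.trans
          ((comp_cokernel_π_kernel_ι_eq_zero_iff (kernel.ι p.b ≫ S.g) _).2 hl))
    (fun _ _ => hom_ext_b (kernel.lift_ι _ _ _))
    (fun k _ l hl => hom_ext_b <| (cancel_mono (kernel.ι p.b)).1 <|
      (congrArg Hom.b hl).trans (kernel.lift_ι p.b k.b _).symm)

instance : HasKernels (SES C) where
  has_limit p := ⟨⟨_, kernelιIsKernel p⟩⟩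

instance {S T : SES C} (p : S ⟶ T) : PreservesLimit (parallelPair p 0) (middle C) :=
  preservesLimit_of_preserves_limit_cone (kernelιIsKernel p)
    ((isLimitMapConeForkEquiv' (middle C) (kernelι_comp p)).symm (kernelIsKernel p.b))

/-- The projection from `T` onto the cokernel of `p : S ⟶ T`. The middle object of the cokernel
is the cokernel of `p.b`. -/
noncomputable def cokernelπ {S T : SES C} (p : S ⟶ T) : T ⟶ ofCokernel (T.f ≫ cokernel.π p.b) :=
  T.toOfCokernel (cokernel.π p.b)

lemma comp_cokernelπ {S T : SES C} (p : S ⟶ T) : p ≫ cokernelπ p = 0 :=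
  hom_ext_b (cokernel.condition p.b)

/-- The universal property of `cokernelπ p`. -/
noncomputable def cokernelπIsCokernel {S T : SES C} (p : S ⟶ T) :
    IsColimit (CokernelCofork.ofπ (cokernelπ p) (comp_cokernelπ p)) :=
  CokernelCofork.IsColimit.ofπ _ _
    (fun {W} k hk =>
      have hk_b : p.b ≫ k.b = 0 := by rw [← comp_b, hk, zero_b]
      homMk (S := ofCokernel (T.f ≫ cokernel.π p.b)) (cokernel.desc p.b k.b hk_b) <| by
        have hd : (T.f ≫ cokernel.π p.b) ≫ cokernel.desc p.b k.b hk_b ≫ W.g = 0 := by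
          simp [f_comp_b_comp_g]
        exact (kernel_ι_cokernel_π_comp_eq_zero_iff (T.f ≫ cokernel.π p.b) _).2 hd)
    (fun _ _ => hom_ext_b (cokernel.π_desc _ _ _))
    (fun k _ l hl => hom_ext_b <| (cancel_epi (cokernel.π p.b)).1 <|
      (congrArg Hom.b hl).trans (cokernel.π_desc p.b k.b _).symm)

instance : HasCokernels (SES C) where
  has_colimit p := ⟨⟨_, cokernelπIsCokernel p⟩⟩

lemma exists_middle_map_eq_comp_mono (S : SES C) ⦃B : C⦄ (g : (middle C).obj S ⟶ B) :
    ∃ (T : SES C) (p : S ⟶ T) (i : B ⟶ (middle C).obj T), Mono i ∧ (middle C).map p = g ≫ i :=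
  ⟨ofCokernel (S.f ≫ g), S.toOfCokernel g, 𝟙 B, inferInstanceAs (Mono (𝟙 B)),
    (Category.comp_id g).symm⟩

/-- The identification of the normal subobjects of a short exact sequence with those of its
middle object. -/
noncomputable def normalSubobjectOrderIso (S : SES C) :
    NormalSubobject S ≃o NormalSubobject S.Y :=
  NormalSubobject.mapOrderIso (middle C) S.exists_middle_map_eq_comp_mono

lemma normalSubobjectsDistrib_iff (S : SES C) :
    NormalSubobjectsDistrib S ↔ NormalSubobjectsDistrib S.Y :=
  ⟨fun h => h.of_orderIso S.normalSubobjectOrderIso.symm,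
    fun h => h.of_orderIso S.normalSubobjectOrderIso⟩

lemma forall_normalSubobjectsDistrib_iff :
    (∀ S : SES C, NormalSubobjectsDistrib S) ↔ ∀ A : C, NormalSubobjectsDistrib A :=
  ⟨fun h A => (ofKernel (𝟙 A)).normalSubobjectsDistrib_iff.1 (h _),
    fun h S => S.normalSubobjectsDistrib_iff.2 (h S.Y)⟩

end Kernels

end SES

section Iteration

variable (C) [HasZeroMorphisms C] [HasKernels C] [HasCokernels C]

lemma iterSES_hasKernels_and_hasCokernels (n : ℕ) :
    HasKernels (iterSES C n).obj ∧ HasCokernels (iterSES C n).obj := by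
  induction n with
  | zero => exact ⟨inferInstanceAs (HasKernels (SES C)), inferInstanceAs (HasCokernels (SES C))⟩
  | succ n ih =>
    obtain ⟨_, _⟩ := ih
    exact ⟨inferInstanceAs (HasKernels (SES (iterSES C n).obj)),
      inferInstanceAs (HasCokernels (SES (iterSES C n).obj))⟩

lemma forall_iterSES_normalSubobjectsDistrib_iff (n : ℕ) :
    (∀ S : (iterSES C n).obj, NormalSubobjectsDistrib S) ↔ ∀ A : C, NormalSubobjectsDistrib A := by
  induction n with
  | zero => exact SES.forall_normalSubobjectsDistrib_iff
  | succ n ih =>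
    obtain ⟨_, _⟩ := iterSES_hasKernels_and_hasCokernels C n
    exact (SES.forall_normalSubobjectsDistrib_iff (C := (iterSES C n).obj)).trans ih

end Iteration

/-- Let `C` be a z-exact category.  The lattice of normal subobjects is
distributive for every object of `C` if and only if it is distributive for every object of
the category `SES C` of short exact sequences of `C`.  Consequently, when this holds, the
lattice of normal subobjects is distributive for every object of every iterated category
`ses^n(C)`. -/
theorem stmt17 {C : Type u} [Category.{v} C] [HasZeroObject C] [HasZeroMorphisms C]
    [HasKernels C] [HasCokernels C] :
    ((∀ A : C, NormalSubobjectsDistrib A) ↔ (∀ S : SES C, NormalSubobjectsDistrib S)) ∧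
    ((∀ A : C, NormalSubobjectsDistrib A) →
      ∀ (n : ℕ) (S : (iterSES C n).obj), NormalSubobjectsDistrib S) := by
  exact ⟨SES.forall_normalSubobjectsDistrib_iff.symm,
    fun h n => (forall_iterSES_normalSubobjectsDistrib_iff C n).2 h⟩
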